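/- Let F ⊆ E be a flat, R a face of 𝒜_F, and 𝒻 : F = F_0 ⊊ F_1 ⊊ ⋯ ⊊ F_k = E a flag of flats based at F. Let S ⊆ E with F ⊆ S and let R' be a face of 𝒜_S contained in the topological closure of R. Then the cone C^{(F,R)}_𝒻 meets the intrinsic (relative) interior of π_{F,R}(σ_{S,R'}) in W_{F,R} if and only if S ∈ {F_0, F_1, …, F_k}, i.e. S is a flat appearing in the flag 𝒻. (First part of Lemma 6.2.) -/

import Mathlib

open Set Submodule

noncomputable section

variable {E : Type*} [Fintype E] [DecidableEq E]
variable {M : Type*} [NormedAddCommGroup M] [NormedSpace ℝ M] [FiniteDimensional ℝ M]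

/-- The positive closed halfspace `H_e^+` of the hyperplane `H_e`. -/
def Hplus (a : E → (M →ₗ[ℝ] ℝ)) (r : E → ℝ) (e : E) : Set M := {m | a e m + r e ≤ 0}

/-- The negative closed halfspace `H_e^-` of the hyperplane `H_e`. -/
def Hminus (a : E → (M →ₗ[ℝ] ℝ)) (r : E → ℝ) (e : E) : Set M := {m | 0 ≤ a e m + r e}

/-- `R` is a face of the localization `𝒜_S`: a nonempty fiber of the sign map
`M → SignType^S`, `m ↦ (sign (a e m + r e))_{e ∈ S}`. -/
def IsFace (a : E → (M →ₗ[ℝ] ℝ)) (r : E → ℝ) (S : Set E) (R : Set M) : Prop :=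
  ∃ m₀ : M, R = {m : M | ∀ e ∈ S, SignType.sign (a e m + r e) = SignType.sign (a e m₀ + r e)}

/-- `S^+(R)`: the elements `e ∈ S` with `R ⊆ H_e^+`. -/
def posSet (a : E → (M →ₗ[ℝ] ℝ)) (r : E → ℝ) (S : Set E) (R : Set M) : Set E :=
  {e ∈ S | R ⊆ Hplus a r e}

/-- `S^-(R)`: the elements `e ∈ S` with `R ⊆ H_e^-`. -/
def negSet (a : E → (M →ₗ[ℝ] ℝ)) (r : E → ℝ) (S : Set E) (R : Set M) : Set E :=
  {e ∈ S | R ⊆ Hminus a r e}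

/-- `S^0(R) = S^+(R) ∩ S^-(R)`. -/
def zeroSet (a : E → (M →ₗ[ℝ] ℝ)) (r : E → ℝ) (S : Set E) (R : Set M) : Set E :=
  posSet a r S R ∩ negSet a r S R

/-- The linear map `(E → ℝ) → N` sending the basis vector `δ_e` to `a_e`. -/
def toN (a : E → (M →ₗ[ℝ] ℝ)) : (E → ℝ) →ₗ[ℝ] (M →ₗ[ℝ] ℝ) :=
  Fintype.linearCombination ℝ a

/-- `Λ`, the kernel of `(E → ℝ) → N`. -/
def Lam (a : E → (M →ₗ[ℝ] ℝ)) : Submodule ℝ (E → ℝ) := LinearMap.ker (toN a)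

/-- The antidiagonal embedding `∇ : x ↦ (x, -x)`. -/
def nabla : (E → ℝ) →ₗ[ℝ] (E → ℝ) × (E → ℝ) :=
  LinearMap.prod LinearMap.id (-LinearMap.id)

/-- `∇(Λ)`. -/
def nabLam (a : E → (M →ₗ[ℝ] ℝ)) : Submodule ℝ ((E → ℝ) × (E → ℝ)) :=
  (Lam a).map nabla

/-- The Lawrence cocharacter space `Ñ = ((E → ℝ) × (E → ℝ))/∇(Λ)`. -/
abbrev tildeN (a : E → (M →ₗ[ℝ] ℝ)) : Type _ := ((E → ℝ) × (E → ℝ)) ⧸ nabLam a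

/-- `ρ_e^+`, the image of `(δ_e, 0)` in `Ñ`. -/
def rhoP (a : E → (M →ₗ[ℝ] ℝ)) (e : E) : tildeN a :=
  Submodule.Quotient.mk (Pi.single e 1, 0)

/-- `ρ_e^-`, the image of `(0, δ_e)` in `Ñ`. -/
def rhoM (a : E → (M →ₗ[ℝ] ℝ)) (e : E) : tildeN a :=
  Submodule.Quotient.mk (0, Pi.single e 1)

/-- The cone `σ_{S,R} ⊆ Ñ` generated by `{ρ_e^+ : e ∈ S^+(R)} ∪ {ρ_f^- : f ∈ S^-(R)}`
together with `0`: the set of all nonnegative linear combinations of these generators. -/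
def sigmaCone (a : E → (M →ₗ[ℝ] ℝ)) (r : E → ℝ) (S : Set E) (R : Set M) : Set (tildeN a) :=
  {v | ∃ c d : E → ℝ, (∀ e, 0 ≤ c e) ∧ (∀ e, 0 ≤ d e) ∧
    v = ∑ e, (posSet a r S R).indicator c e • rhoP a e
      + ∑ e, (negSet a r S R).indicator d e • rhoM a e}

/-- The addition map `(x, y) ↦ x + y` on `(E → ℝ) × (E → ℝ)`. -/
def addMap (E : Type*) [Fintype E] : ((E → ℝ) × (E → ℝ)) →ₗ[ℝ] (E → ℝ) :=
  LinearMap.fst ℝ (E → ℝ) (E → ℝ) + LinearMap.snd ℝ (E → ℝ) (E → ℝ)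

lemma nabLam_le_ker_addMap (a : E → (M →ₗ[ℝ] ℝ)) :
    nabLam a ≤ LinearMap.ker (addMap E) := by
  rintro v ⟨x, hx, rfl⟩
  simp [addMap, nabla]

/-- The map `Φ̄ : Ñ → (E → ℝ)` induced by `(x, y) ↦ x + y`; it satisfies
`Φ̄(ρ_e^+) = Φ̄(ρ_e^-) = δ_e`. -/
def Phibar (a : E → (M →ₗ[ℝ] ℝ)) : tildeN a →ₗ[ℝ] (E → ℝ) :=
  (nabLam a).liftQ (addMap E) (nabLam_le_ker_addMap a)

lemma Phibar_rhoP (a : E → (M →ₗ[ℝ] ℝ)) (e : E) :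
    Phibar a (rhoP a e) = Pi.single e 1 := by
  simp [Phibar, rhoP, addMap]

lemma Phibar_rhoM (a : E → (M →ₗ[ℝ] ℝ)) (e : E) :
    Phibar a (rhoM a e) = Pi.single e 1 := by
  simp [Phibar, rhoM, addMap]

/-- `ℝ^F`, the span of the coordinate vectors `δ_e` for `e ∈ F`. -/
def RF (E : Type*) [Fintype E] [DecidableEq E] (F : Set E) : Submodule ℝ (E → ℝ) :=
  Submodule.span ℝ ((fun e => Pi.single e (1 : ℝ)) '' F)

/-- The linear span of the cone `σ_{F,R}` in `Ñ`. -/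
def spanSigma (a : E → (M →ₗ[ℝ] ℝ)) (r : E → ℝ) (F : Set E) (R : Set M) :
    Submodule ℝ (tildeN a) :=
  Submodule.span ℝ (sigmaCone a r F R)

/-- `W_{F,R} = Ñ / span(σ_{F,R})`. -/
abbrev Wspace (a : E → (M →ₗ[ℝ] ℝ)) (r : E → ℝ) (F : Set E) (R : Set M) : Type _ :=
  tildeN a ⧸ spanSigma a r F R

/-- The quotient map `π_{F,R} : Ñ → W_{F,R}`. -/
def piFR (a : E → (M →ₗ[ℝ] ℝ)) (r : E → ℝ) (F : Set E) (R : Set M) :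
    tildeN a →ₗ[ℝ] Wspace a r F R :=
  (spanSigma a r F R).mkQ

lemma spanSigma_le_ker (a : E → (M →ₗ[ℝ] ℝ)) (r : E → ℝ) (F : Set E) (R : Set M) :
    spanSigma a r F R ≤ LinearMap.ker ((RF E F).mkQ ∘ₗ Phibar a) := by
  rw [spanSigma, Submodule.span_le]
  rintro v ⟨c, d, hc, hd, rfl⟩
  simp only [SetLike.mem_coe, LinearMap.mem_ker, LinearMap.comp_apply]
  rw [Submodule.mkQ_apply, Submodule.Quotient.mk_eq_zero, map_add, map_sum, map_sum]
  simp only [map_smul]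
  apply Submodule.add_mem
  · apply Submodule.sum_mem
    intro e _
    by_cases he : e ∈ posSet a r F R
    · rw [Set.indicator_of_mem he]
      exact Submodule.smul_mem _ _
        (by rw [Phibar_rhoP]; exact Submodule.subset_span ⟨e, he.1, rfl⟩)
    · rw [Set.indicator_of_notMem he, zero_smul]
      exact Submodule.zero_mem _
  · apply Submodule.sum_mem
    intro e _
    by_cases he : e ∈ negSet a r F R
    · rw [Set.indicator_of_mem he]
      exact Submodule.smul_mem _ _
        (by rw [Phibar_rhoM]; exact Submodule.subset_span ⟨e, he.1, rfl⟩)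
    · rw [Set.indicator_of_notMem he, zero_smul]
      exact Submodule.zero_mem _

/-- The induced surjection `Φ̄_{F,R} : W_{F,R} → (E → ℝ)/ℝ^F`. -/
def PhibarFR (a : E → (M →ₗ[ℝ] ℝ)) (r : E → ℝ) (F : Set E) (R : Set M) :
    Wspace a r F R →ₗ[ℝ] ((E → ℝ) ⧸ RF E F) :=
  (spanSigma a r F R).liftQ ((RF E F).mkQ ∘ₗ Phibar a) (spanSigma_le_ker a r F R)

/-- `F ⊆ E` is a flat of the configuration `a`. -/
def IsFlat (a : E → (M →ₗ[ℝ] ℝ)) (F : Set E) : Prop :=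
  F = {e : E | a e ∈ Submodule.span ℝ (a '' F)}

/-- The Bergman cone of a flag `𝒻 : F = F_0 ⊊ F_1 ⊊ ⋯ ⊊ F_k = E`:
`{c_1 δ_{F_1} + ⋯ + c_{k-1} δ_{F_{k-1}} + c δ_E : c_1, …, c_{k-1} ≥ 0, c ∈ ℝ} ⊆ ℝ^E`. -/
def bergCone {E : Type*} [Fintype E] (k : ℕ) (flag : Fin (k + 1) → Set E) : Set (E → ℝ) :=
  {v | ∃ c : Fin (k + 1) → ℝ, c 0 = 0 ∧ (∀ i : Fin (k + 1), 0 < i.val → i.val < k → 0 ≤ c i) ∧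
    v = ∑ i : Fin (k + 1), c i • (flag i).indicator (1 : E → ℝ)}

/-- The cone `C^{(F,R)}_𝒻 = Φ̄_{F,R}⁻¹(β_𝒻) ⊆ W_{F,R}` of `Trop(𝔐_𝒜)`, where
`β_𝒻 ⊆ (E → ℝ)/ℝ^F` is the image of the Bergman cone of the flag `𝒻`. -/
def Ccone (a : E → (M →ₗ[ℝ] ℝ)) (r : E → ℝ) (F : Set E) (R : Set M)
    (k : ℕ) (flag : Fin (k + 1) → Set E) : Set (Wspace a r F R) :=
  PhibarFR a r F R ⁻¹' ((RF E F).mkQ '' bergCone k flag)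

/-- A linear functional that is nonnegative on `C` and vanishes at an intrinsic interior point
is nonpositive on `C`. -/
lemma aux_relint_pos {W : Type*} [AddCommGroup W] [Module ℝ W] [TopologicalSpace W]
    [IsTopologicalAddGroup W] [ContinuousSMul ℝ W] (C : Set W) (φ : W →ₗ[ℝ] ℝ)
    (hφ : ∀ y ∈ C, 0 ≤ φ y) (x : W) (hx : x ∈ intrinsicInterior ℝ C)
    (y : W) (hy : y ∈ C) (hpos : 0 < φ y) : 0 < φ x := by
  obtain ⟨x', hx', rfl⟩ := hx
  have hyA : y ∈ affineSpan ℝ C := subset_affineSpan ℝ C hy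
  let γ : ℝ → affineSpan ℝ C := fun t =>
    ⟨AffineMap.lineMap (x' : W) y t, AffineMap.lineMap_mem t x'.2 hyA⟩
  have hγ : Continuous γ := by
    refine Continuous.subtype_mk ?_ _
    have : (⇑(AffineMap.lineMap (k := ℝ) (x' : W) y)) = fun t : ℝ => t • (y - x') + (x' : W) := by
      funext t
      simp [AffineMap.lineMap_apply]
    rw [this]
    fun_prop
  have h0 : γ 0 = x' := by
    apply Subtype.ext
    simp [γ]
  have hev : ∀ᶠ t in nhds (0 : ℝ), γ t ∈ interior ((↑) ⁻¹' C : Set (affineSpan ℝ C)) := by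
    apply hγ.continuousAt.eventually_mem
    rw [h0]
    exact isOpen_interior.mem_nhds hx'
  obtain ⟨ε, hε, hball⟩ := Metric.eventually_nhds_iff.1 hev
  have h1 : γ (-(ε / 2)) ∈ interior ((↑) ⁻¹' C : Set (affineSpan ℝ C)) := by
    apply hball
    rw [Real.dist_eq, sub_zero, abs_neg, abs_of_pos (by positivity)]
    linarith
  have h2' : γ (-(ε / 2)) ∈ ((↑) ⁻¹' C : Set (affineSpan ℝ C)) := interior_subset h1
  have h2 : (γ (-(ε / 2)) : W) ∈ C := h2'
  have h3 := hφ _ h2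
  have h4 : φ (γ (-(ε / 2)) : W) = -(ε / 2) * (φ y - φ x') + φ x' := by
    simp [γ, AffineMap.lineMap_apply]
  rw [h4] at h3
  by_contra hcon
  push Not at hcon
  nlinarith

/-- The image of a strictly positive point under a linear map lies in the intrinsic interior of
the image of the orthant. -/
lemma aux_mem_relint {E W : Type*} [Fintype E] [AddCommGroup W] [Module ℝ W] [TopologicalSpace W]
    [IsTopologicalAddGroup W] [ContinuousSMul ℝ W] [T2Space W] [FiniteDimensional ℝ W]
    (L : ((E → ℝ) × (E → ℝ)) →ₗ[ℝ] W) (C : Set W)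
    (hC : C = L '' {p | (∀ e, 0 ≤ p.1 e) ∧ (∀ e, 0 ≤ p.2 e)})
    (g : (E → ℝ) × (E → ℝ)) (hg1 : ∀ e, 0 < g.1 e) (hg2 : ∀ e, 0 < g.2 e) :
    L g ∈ intrinsicInterior ℝ C := by
  have hgC : L g ∈ C := by
    rw [hC]
    exact ⟨g, ⟨fun e => (hg1 e).le, fun e => (hg2 e).le⟩, rfl⟩
  obtain ⟨s0, hs0⟩ := L.rangeRestrict.exists_rightInverse_of_surjective L.range_rangeRestrict
  obtain ⟨s, hs⟩ := LinearMap.exists_extend s0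
  have hLs : ∀ y ∈ LinearMap.range L, L (s y) = y := by
    intro y hy
    have h1 : s y = s0 ⟨y, hy⟩ := by rw [← hs]; rfl
    have h2 := LinearMap.congr_fun hs0 ⟨y, hy⟩
    rw [h1]
    exact congrArg Subtype.val h2
  have hsc : Continuous s := s.continuous_of_finiteDimensional
  have hA : ∀ y ∈ affineSpan ℝ C, y ∈ LinearMap.range L := by
    have : affineSpan ℝ C ≤ (LinearMap.range L).toAffineSubspace := by
      rw [affineSpan_le, hC]
      rintro _ ⟨p, _, rfl⟩
      exact ⟨p, rfl⟩
    intro y hy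
    exact this hy
  refine ⟨⟨L g, subset_affineSpan ℝ C hgC⟩, ?_, rfl⟩
  rw [mem_interior]
  refine ⟨{y | (∀ e, 0 < (g + s ((y : W) - L g)).1 e) ∧ (∀ e, 0 < (g + s ((y : W) - L g)).2 e)},
    ?_, ?_, ?_⟩
  · rintro ⟨y, hy⟩ ⟨h1, h2⟩
    show y ∈ C
    rw [hC]
    refine ⟨g + s (y - L g), ⟨fun e => (h1 e).le, fun e => (h2 e).le⟩, ?_⟩
    rw [map_add, hLs _ (Submodule.sub_mem _ (hA y hy) ⟨g, rfl⟩)]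
    abel
  · have hc : Continuous (fun y : affineSpan ℝ C => g + s ((y : W) - L g)) := by fun_prop
    simp only [Set.ofPred_and, Set.ofPred_forall]
    refine IsOpen.inter ?_ ?_
    · exact isOpen_iInter_of_finite fun e =>
        isOpen_lt continuous_const ((continuous_apply e).comp (continuous_fst.comp hc))
    · exact isOpen_iInter_of_finite fun e =>
        isOpen_lt continuous_const ((continuous_apply e).comp (continuous_snd.comp hc))
  · simpa using ⟨hg1, hg2⟩

/-- The linear parametrization of the cone. -/
def auxL (a : E → (M →ₗ[ℝ] ℝ)) (P Q : Set E) :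
    ((E → ℝ) × (E → ℝ)) →ₗ[ℝ] tildeN a where
  toFun p := ∑ e, P.indicator p.1 e • rhoP a e + ∑ e, Q.indicator p.2 e • rhoM a e
  map_add' p q := by
    simp only [Prod.fst_add, Prod.snd_add, Set.indicator_add', Pi.add_apply, add_smul,
      Finset.sum_add_distrib]
    abel
  map_smul' t p := by
    have h : ∀ (A : Set E) (f : E → ℝ) (x : E),
        A.indicator (t • f) x = t * A.indicator f x := fun A f x => by
      by_cases hx : x ∈ A <;> simp [hx]
    simp only [Prod.smul_fst, Prod.smul_snd, h, mul_smul, smul_add, Finset.smul_sum,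
      RingHom.id_apply]

lemma aux_Phibar (a : E → (M →ₗ[ℝ] ℝ)) (P Q : Set E) (c d : E → ℝ) (f : E) :
    Phibar a (∑ e, P.indicator c e • rhoP a e + ∑ e, Q.indicator d e • rhoM a e) f
      = P.indicator c f + Q.indicator d f := by
  simp only [map_add, map_sum, map_smul, Phibar_rhoP, Phibar_rhoM, Pi.add_apply,
    Finset.sum_apply, Pi.smul_apply, smul_eq_mul, Pi.single_apply]
  simp

lemma aux_RF (F : Set E) (e : E) (he : e ∉ F) :
    RF E F ≤ LinearMap.ker (LinearMap.proj (R := ℝ) (φ := fun _ : E => ℝ) e) := by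
  rw [RF, Submodule.span_le]
  rintro _ ⟨f, hf, rfl⟩
  have : e ≠ f := fun h => he (h ▸ hf)
  simp [this]

lemma aux_face (a : E → (M →ₗ[ℝ] ℝ)) (r : E → ℝ) (S : Set E) (R : Set M) (hR : IsFace a r S R)
    (e : E) (he : e ∈ S) : e ∈ posSet a r S R ∨ e ∈ negSet a r S R := by
  obtain ⟨m, rfl⟩ := hR
  rcases le_total (a e m + r e) 0 with h | h
  · left
    refine ⟨he, fun x hx => ?_⟩
    have h1 := hx e he
    show a e x + r e ≤ 0
    by_contra hcon
    push Not at hcon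
    rw [sign_pos hcon] at h1
    have := sign_eq_one_iff.1 h1.symm
    linarith
  · right
    refine ⟨he, fun x hx => ?_⟩
    have h1 := hx e he
    show 0 ≤ a e x + r e
    by_contra hcon
    push Not at hcon
    rw [sign_neg hcon] at h1
    have := sign_eq_neg_one_iff.1 h1.symm
    linarith

/-- Combinatorial part: a set which is the support of a Bergman vector is in the flag. -/
lemma aux_flag {E : Type*} (k : ℕ) (flag : Fin (k + 1) → Set E) (hmono : StrictMono flag)
    (hlast : flag (Fin.last k) = Set.univ) (S : Set E) (hFS : flag 0 ⊆ S)
    (c : Fin (k + 1) → ℝ) (hc0 : c 0 = 0)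
    (hc : ∀ i : Fin (k + 1), 0 < i.val → i.val < k → 0 ≤ c i)
    (hpos : ∀ e ∉ flag 0, e ∈ S → 0 < ∑ i, c i * (flag i).indicator (1 : E → ℝ) e)
    (hzero : ∀ e ∉ S, ∑ i, c i * (flag i).indicator (1 : E → ℝ) e = 0) :
    ∃ j, S = flag j := by
  obtain ⟨j, hj, hmin⟩ := WellFounded.has_min (wellFounded_lt (α := Fin (k + 1)))
    {j | S ⊆ flag j} ⟨Fin.last k, by simp [hlast]⟩
  refine ⟨j, Set.Subset.antisymm hj ?_⟩
  rcases Fin.eq_zero_or_eq_succ j with rfl | ⟨i, rfl⟩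
  · exact hFS
  · have h1 : ¬ S ⊆ flag i.castSucc := fun h => hmin _ h Fin.castSucc_lt_succ
    obtain ⟨f, hfS, hf⟩ := Set.not_subset.1 h1
    have hf0 : f ∉ flag 0 := fun h => hf (hmono.monotone (Fin.zero_le _) h)
    intro e he
    by_contra heS
    have hp := hpos f hf0 hfS
    rw [← hzero e heS] at hp
    refine absurd hp (not_lt.2 (Finset.sum_le_sum fun l _ => ?_))
    by_cases hfl : f ∈ flag l
    · have hle : i.succ ≤ l := by
        by_contra hcon
        push Not at hcon
        exact hf (hmono.monotone (Fin.le_castSucc_iff.2 hcon) hfl)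
      have hel : e ∈ flag l := hmono.monotone hle he
      simp [hfl, hel]
    · have hlk : l ≠ Fin.last k := by
        rintro rfl
        exact hfl (by simp [hlast])
      have hcl : 0 ≤ c l := by
        by_cases h : l = 0
        · rw [h, hc0]
        · exact hc l (Nat.pos_of_ne_zero fun h' => h (Fin.ext h'))
            (Fin.val_lt_last hlk)
      rw [Set.indicator_of_notMem hfl, mul_zero]
      exact mul_nonneg hcl (Set.indicator_nonneg (fun _ _ => zero_le_one) _)

/-- First part of Lemma 6.2: the cone `C^{(F,R)}_𝒻` meets the relative interior of
`π_{F,R}(σ_{S,R'})` iff `S` is a flat appearing in the flag `𝒻`. -/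
theorem Ccone_meets_relint_iff
    (a : E → (M →ₗ[ℝ] ℝ)) (r : E → ℝ)
    (ha : ∀ e, a e ≠ 0) (hspan : Submodule.span ℝ (Set.range a) = ⊤)
    (F : Set E) (hF : IsFlat a F) (R : Set M) (hR : IsFace a r F R)
    (k : ℕ) (flag : Fin (k + 1) → Set E)
    (hflat : ∀ i, IsFlat a (flag i)) (hmono : StrictMono flag)
    (h0 : flag 0 = F) (hlast : flag (Fin.last k) = Set.univ)
    (S : Set E) (hFS : F ⊆ S) (R' : Set M) (hR' : IsFace a r S R')
    (hsub : R' ⊆ closure R) :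
    (Ccone a r F R k flag ∩
        intrinsicInterior ℝ (piFR a r F R '' sigmaCone a r S R')).Nonempty ↔
      ∃ j : Fin (k + 1), S = flag j := by
  subst h0
  have hval : ∀ e, e ∉ flag 0 → ∃ ψ : ((E → ℝ) ⧸ RF E (flag 0)) →ₗ[ℝ] ℝ,
      ∀ v : E → ℝ, ψ ((RF E (flag 0)).mkQ v) = v e := fun e he =>
    ⟨(RF E (flag 0)).liftQ _ (aux_RF (flag 0) e he), fun v => by simp⟩
  have hPhi : ∀ v, PhibarFR a r (flag 0) R (piFR a r (flag 0) R v)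
      = (RF E (flag 0)).mkQ (Phibar a v) := fun v => by
    simp [PhibarFR, piFR]
  constructor
  · rintro ⟨x, ⟨b, ⟨c, hc0, hc, rfl⟩, hb⟩, hx⟩
    obtain ⟨v, ⟨p, q, hp, hq, hv⟩, hvx⟩ := intrinsicInterior_subset hx
    have key : ∀ e ∉ flag 0, ∑ i, c i * (flag i).indicator (1 : E → ℝ) e
        = (posSet a r S R').indicator p e + (negSet a r S R').indicator q e := by
      intro e he
      obtain ⟨ψ, hψ⟩ := hval e he
      have h1 := congrArg ψ hb
      rw [← hvx, hPhi, hψ, hψ, hv, aux_Phibar] at h1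
      rw [← h1]
      simp [Finset.sum_apply]
    refine aux_flag k flag hmono hlast S hFS c hc0 hc ?_ ?_
    · intro e he heS
      obtain ⟨ψ, hψ⟩ := hval e he
      have h2 : (ψ ∘ₗ PhibarFR a r (flag 0) R) x
          = ∑ i, c i * (flag i).indicator (1 : E → ℝ) e := by
        rw [LinearMap.comp_apply, ← hb, hψ]
        simp [Finset.sum_apply]
      rw [← h2]
      refine aux_relint_pos _ _ ?_ x hx (piFR a r (flag 0) R
        (∑ f, (posSet a r S R').indicator (1 : E → ℝ) f • rhoP a f
          + ∑ f, (negSet a r S R').indicator (1 : E → ℝ) f • rhoM a f)) ?_ ?_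
      · rintro _ ⟨_, ⟨c', d', hc', hd', rfl⟩, rfl⟩
        rw [LinearMap.comp_apply, hPhi, hψ, aux_Phibar]
        exact add_nonneg (Set.indicator_nonneg (fun _ _ => hc' _) _)
          (Set.indicator_nonneg (fun _ _ => hd' _) _)
      · exact ⟨_, ⟨1, 1, fun _ => zero_le_one, fun _ => zero_le_one, rfl⟩, rfl⟩
      · rw [LinearMap.comp_apply, hPhi, hψ, aux_Phibar]
        rcases aux_face a r S R' hR' e heS with h | h
        · rw [Set.indicator_of_mem h]
          exact add_pos_of_pos_of_nonneg zero_lt_one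
            (Set.indicator_nonneg (fun _ _ => zero_le_one) _)
        · rw [Set.indicator_of_mem h]
          exact add_pos_of_nonneg_of_pos
            (Set.indicator_nonneg (fun _ _ => zero_le_one) _) zero_lt_one
    · intro e he
      rw [key e fun h => he (hFS h), Set.indicator_of_notMem fun h => he h.1,
        Set.indicator_of_notMem fun h => he h.1, add_zero]
  · rintro ⟨j, rfl⟩
    classical
    let P := posSet a r (flag j) R'
    let Q := negSet a r (flag j) R'
    let g : (E → ℝ) × (E → ℝ) :=
      (fun e => if e ∈ Q then 1 / 2 else 1, fun e => if e ∈ P then 1 / 2 else 1)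
    have hg : Phibar a (auxL a P Q g) = (flag j).indicator 1 := by
      ext e
      have h1 := aux_Phibar a P Q g.1 g.2 e
      refine h1.trans ?_
      by_cases he : e ∈ flag j
      · rw [Set.indicator_of_mem he]
        by_cases hP : e ∈ P
        · by_cases hQ : e ∈ Q
          · simp [g, hP, hQ]; norm_num
          · simp [g, hP, hQ]
        · have hQ : e ∈ Q := (aux_face a r _ R' hR' e he).resolve_left hP
          simp [g, hP, hQ]
      · rw [Set.indicator_of_notMem he, Set.indicator_of_notMem fun h => he h.1,
          Set.indicator_of_notMem fun h => he h.1, add_zero]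
    refine ⟨(piFR a r (flag 0) R ∘ₗ auxL a P Q) g, ?_, ?_⟩
    · rw [Ccone, Set.mem_preimage, LinearMap.comp_apply]
      rw [hPhi, hg]
      by_cases hj : j = 0
      · subst hj
        refine ⟨0, ⟨0, rfl, fun _ _ _ => le_rfl, by simp⟩, ?_⟩
        rw [map_zero, eq_comm, Submodule.mkQ_apply, Submodule.Quotient.mk_eq_zero]
        have : (flag 0).indicator (1 : E → ℝ)
            = ∑ e, (flag 0).indicator (1 : E → ℝ) e • Pi.single e (1 : ℝ) := by
          ext f
          simp [Finset.sum_apply, Pi.single_apply]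
        rw [this]
        refine Submodule.sum_mem _ fun e _ => ?_
        by_cases he : e ∈ flag 0
        · exact Submodule.smul_mem _ _ (Submodule.subset_span ⟨e, he, rfl⟩)
        · rw [Set.indicator_of_notMem he, zero_smul]
          exact Submodule.zero_mem _
      · refine ⟨_, ⟨Pi.single j 1, ?_, ?_, ?_⟩, rfl⟩
        · exact Pi.single_eq_of_ne (Ne.symm hj) _
        · intro i _ _
          rw [Pi.single_apply]
          split_ifs <;> norm_num
        · simp [Pi.single_apply]
    · have : IsClosed (nabLam a : Set ((E → ℝ) × (E → ℝ))) :=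
        Submodule.closed_of_finiteDimensional _
      have : T2Space (tildeN a) := inferInstance
      have : IsClosed (spanSigma a r (flag 0) R : Set (tildeN a)) :=
        Submodule.closed_of_finiteDimensional _
      have : T2Space (Wspace a r (flag 0) R) := inferInstance
      refine aux_mem_relint _ _ ?_ g ?_ ?_
      · rw [LinearMap.coe_comp, Set.image_comp]
        congr 1
        ext v
        constructor
        · rintro ⟨c, d, hc, hd, rfl⟩
          exact ⟨(c, d), ⟨hc, hd⟩, rfl⟩
        · rintro ⟨⟨c, d⟩, ⟨hc, hd⟩, rfl⟩
          exact ⟨c, d, hc, hd, rfl⟩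
      · intro e
        simp only [g]
        split_ifs <;> norm_num
      · intro e
        simp only [g]
        split_ifs <;> norm_num

end
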